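/- Watson's classical summation theorem for a terminating hypergeometric 3F2-series of even order: for every natural number n and all complex numbers a and c such that none of the denominator parameters produces a vanishing factor (i.e. (a+1)/2 + k ≠ 0 and 2c + k ≠ 0 for all integers k with 0 ≤ k ≤ 2n-1, and (1-a)/2 - n + k ≠ 0 and 1/2 + c + k ≠ 0 for all integers k with 0 ≤ k ≤ n-1), one has ∑_{k=0}^{2n} [(-2n)_k (a+2n)_k (c)_k] / [((a+1)/2)_k (2c)_k k!] = [(1/2)_n (c + (1-a)/2 - n)_n] / [((1-a)/2 - n)_n (c + 1/2)_n], where (x)_k = x(x+1)⋯(x+k-1) denotes the rising factorial (Pochhammer symbol). -/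

import Mathlib

open Finset

/-- The Pochhammer symbol (rising factorial) `(x)_k = x(x+1)⋯(x+k-1)` for a complex
number `x`, with `(x)_0 = 1`. -/
noncomputable def poch (x : ℂ) (k : ℕ) : ℂ := (ascPochhammer ℂ k).eval x

lemma poch_zero (x : ℂ) : poch x 0 = 1 := by simp [poch]

lemma poch_succ (x : ℂ) (k : ℕ) : poch x (k + 1) = poch x k * (x + k) := by
  simp [poch, ascPochhammer_succ_eval]

lemma poch_succ_left (x : ℂ) (k : ℕ) : poch x (k + 1) = x * poch (x + 1) k := by
  simp [poch, ascPochhammer_succ_left, Polynomial.eval_comp]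

lemma poch_shift (x : ℂ) (k : ℕ) : x * poch (x + 1) k = poch x k * (x + k) := by
  rw [← poch_succ_left, poch_succ]

lemma poch_shift_two (x : ℂ) (k : ℕ) :
    x * (x + 1) * poch (x + 2) k = (x + k) * (x + k + 1) * poch x k := by
  have h1 := poch_shift x k
  have h2 := poch_shift (x + 1) k
  rw [show x + 1 + 1 = x + 2 by ring] at h2
  linear_combination x * h2 + (x + 1 + k) * h1

lemma poch_ne_zero (x : ℂ) (k : ℕ) (h : ∀ j : ℕ, j < k → x + j ≠ 0) : poch x k ≠ 0 := by
  induction k with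
  | zero => simp [poch_zero]
  | succ k ih =>
    rw [poch_succ]
    exact mul_ne_zero (ih fun j hj => h j (by omega)) (h k (by omega))

lemma poch_neg_eq_zero (m k : ℕ) (h : m < k) : poch (-(m : ℂ)) k = 0 := by
  induction k with
  | zero => omega
  | succ k ih =>
    rw [poch_succ]
    rcases Nat.lt_succ_iff_lt_or_eq.mp h with h | h
    · rw [ih h, zero_mul]
    · rw [h]; simp

/-- The summand. -/
noncomputable def wt (x y a c : ℂ) (k : ℕ) : ℂ :=
  (poch x k * poch y k * poch c k) /
    (poch ((a + 1) / 2) k * poch (2 * c) k * (Nat.factorial k : ℂ))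

lemma wt_n (n : ℕ) (y a c : ℂ) (k : ℕ) :
    (2 * n + 1) * (2 * n + 2) * wt (-(2 * n : ℂ)) y a c k
      = (2 * n + 1 - k) * (2 * n + 2 - k) * wt (-(2 * n : ℂ) - 2) y a c k := by
  have h := poch_shift_two (-(2 * n : ℂ) - 2) k
  rw [show -(2 * n : ℂ) - 2 + 2 = -(2 * n : ℂ) by ring] at h
  unfold wt
  generalize (a + 1) / 2 = b
  simp only [div_eq_mul_inv]
  linear_combination (poch y k * poch c k *
    (poch b k * poch (2 * c) k * (Nat.factorial k : ℂ))⁻¹) * h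

lemma wt_a (x y a c : ℂ) (k : ℕ) :
    y * (y + 1) * wt x (y + 2) a c k = (y + k) * (y + k + 1) * wt x y a c k := by
  have h := poch_shift_two y k
  unfold wt
  generalize (a + 1) / 2 = b
  simp only [div_eq_mul_inv]
  linear_combination (poch x k * poch c k *
    (poch b k * poch (2 * c) k * (Nat.factorial k : ℂ))⁻¹) * h

lemma wt_succ (x y a c : ℂ) (k : ℕ) (h1 : (a + 1) / 2 + k ≠ 0) (h2 : 2 * c + k ≠ 0) :
    ((a + 1) / 2 + k) * (2 * c + k) * (k + 1) * wt x y a c (k + 1)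
      = (x + k) * (y + k) * (c + k) * wt x y a c k := by
  have h3 : (k : ℂ) + 1 ≠ 0 := by exact_mod_cast Nat.succ_ne_zero k
  unfold wt
  generalize (a + 1) / 2 = b at *
  simp only [poch_succ, Nat.factorial_succ]
  push_cast
  generalize b + (k : ℂ) = u at *
  generalize 2 * c + (k : ℂ) = v at *
  generalize (k : ℂ) + 1 = w at *
  generalize 2 * c = d at *
  simp only [div_eq_mul_inv, mul_inv]
  field_simp

lemma partial_sum (n : ℕ) (a c : ℂ) (K : ℕ) (hK : K ≤ 2 * n + 2)
    (h₁ : ∀ k : ℕ, k < 2 * n + 2 → (a + 1) / 2 + k ≠ 0)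
    (h₂ : ∀ k : ℕ, k < 2 * n + 2 → 2 * c + k ≠ 0) :
    (n + 1) * ((a + 2 * n) * (a + 2 * n + 1) * (2 * c + 2 * n + 1) *
        ∑ k ∈ Finset.range (K + 1), wt (-(2 * n : ℂ) - 2) (a + 2 * n + 2) a c k
      - (2 * n + 1) * (a + 2 * n) * (a + 1 - 2 * c + 2 * n) *
        ∑ k ∈ Finset.range (K + 1), wt (-(2 * n : ℂ)) (a + 2 * n) a c k)
    = -(a + 4 * n + 2) * wt (-(2 * n : ℂ) - 2) (a + 2 * n) a c K
        * (K - 2 * n - 2) * (a + 2 * n + K) * (c + K) := by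
  induction K with
  | zero =>
    simp [wt, poch_zero]
    ring
  | succ K ih =>
    have ih := ih (by omega)
    rw [Finset.sum_range_succ _ (K + 1), Finset.sum_range_succ _ (K + 1)]
    have e1 := wt_n n (a + 2 * n) a c (K + 1)
    have e2 := wt_a (-(2 * n : ℂ) - 2) (a + 2 * n) a c (K + 1)
    have e3 := wt_succ (-(2 * n : ℂ) - 2) (a + 2 * n) a c K (h₁ K (by omega)) (h₂ K (by omega))
    push_cast at *
    linear_combination ih + (n + 1) * (2 * c + 2 * n + 1) * e2
      - (a + 2 * n) * (a + 1 - 2 * c + 2 * n) / 2 * e1 + (a + 4 * n + 2) * e3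

lemma watson_generic (n : ℕ) (a c : ℂ)
    (h₁ : ∀ k : ℕ, k < 2 * n → (a + 1) / 2 + k ≠ 0)
    (h₂ : ∀ k : ℕ, k < 2 * n → 2 * c + k ≠ 0)
    (h₃ : ∀ k : ℕ, k < n → (1 - a) / 2 - n + k ≠ 0)
    (h₄ : ∀ k : ℕ, k < n → 1 / 2 + c + k ≠ 0)
    (h₅ : ∀ k : ℕ, k < n → a + 2 * k ≠ 0) :
    ∑ k ∈ Finset.range (2 * n + 1), wt (-(2 * n : ℂ)) (a + 2 * n) a c k =
      (poch (1 / 2) n * poch (c + (1 - a) / 2 - n) n) /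
        (poch ((1 - a) / 2 - n) n * poch (c + 1 / 2) n) := by
  induction n with
  | zero => simp [wt, poch_zero]
  | succ n ih =>
    have ih := ih (fun k hk => h₁ k (by omega)) (fun k hk => h₂ k (by omega))
      (fun k hk => by
        have := h₃ (k + 1) (by omega)
        push_cast at this
        intro h; apply this; linear_combination h)
      (fun k hk => h₄ k (by omega)) (fun k hk => h₅ k (by omega))
    have key := partial_sum n a c (2 * n + 2) le_rfl (fun k hk => h₁ k (by omega))
      (fun k hk => h₂ k (by omega))
    have z : ∀ k, 2 * n < k → wt (-(2 * n : ℂ)) (a + 2 * n) a c k = 0 := by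
      intro k hk
      have := poch_neg_eq_zero (2 * n) k hk
      push_cast at this
      simp [wt, this]
    rw [Finset.sum_range_succ (fun k => wt (-(2 * n : ℂ)) (a + 2 * n) a c k) (2 * n + 2),
      Finset.sum_range_succ (fun k => wt (-(2 * n : ℂ)) (a + 2 * n) a c k) (2 * n + 1),
      z _ (by omega), z _ (by omega), ih] at key
    have b1 : a + 2 * n ≠ 0 := h₅ n (by omega)
    have b2 : a + 2 * n + 1 ≠ 0 := by
      intro h; apply h₁ n (by omega); linear_combination h / 2
    have b3 : 2 * c + 2 * n + 1 ≠ 0 := by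
      intro h; apply h₄ n (by omega); linear_combination h / 2
    have b4 : (n : ℂ) + 1 ≠ 0 := by exact_mod_cast Nat.succ_ne_zero n
    have p1 : poch ((1 - a) / 2 - n) n ≠ 0 := poch_ne_zero _ _ fun k hk => by
      have := h₃ (k + 1) (by omega)
      push_cast at this
      intro h; apply this; linear_combination h
    have p2 : poch (c + 1 / 2) n ≠ 0 := poch_ne_zero _ _ fun k hk => by
      rw [add_comm c]; exact h₄ k (by omega)
    rw [show 2 * (n + 1) + 1 = 2 * n + 2 + 1 by ring]
    push_cast at key ⊢
    rw [show -(2 * ((n : ℂ) + 1)) = -(2 * n : ℂ) - 2 by ring,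
      show a + 2 * ((n : ℂ) + 1) = a + 2 * n + 2 by ring]
    rw [poch_succ_left (c + (1 - a) / 2 - (n + 1)), poch_succ_left ((1 - a) / 2 - (n + 1)),
      show c + (1 - a) / 2 - ((n : ℂ) + 1) + 1 = c + (1 - a) / 2 - n by ring,
      show (1 - a) / 2 - ((n : ℂ) + 1) + 1 = (1 - a) / 2 - n by ring,
      poch_succ, poch_succ]
    set S := ∑ k ∈ Finset.range (2 * n + 2 + 1), wt (-(2 * n : ℂ) - 2) (a + 2 * n + 2) a c k
    generalize poch ((1 - a) / 2 - n) n = q1 at *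
    generalize poch (c + 1 / 2) n = q2 at *
    generalize poch (1 / 2) n = q3 at *
    generalize poch (c + (1 - a) / 2 - n) n = q4 at *
    rw [show (1 - a) / 2 - ((n : ℂ) + 1) = -(a + 2 * n + 1) / 2 by ring,
      show c + 1 / 2 + (n : ℂ) = (2 * c + 2 * n + 1) / 2 by ring]
    have key2 : (a + 2 * n + 1) * (2 * c + 2 * n + 1) * S
        = (2 * n + 1) * (a + 1 - 2 * c + 2 * n) * (q3 * q4 / (q1 * q2)) := by
      apply mul_left_cancel₀ (mul_ne_zero b4 b1)
      linear_combination key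
    have : S = (2 * n + 1) * (a + 1 - 2 * c + 2 * n) * (q3 * q4 / (q1 * q2)) /
        ((a + 2 * n + 1) * (2 * c + 2 * n + 1)) := by
      rw [eq_div_iff (mul_ne_zero b2 b3), ← key2]; ring
    rw [this]
    field_simp
    ring

lemma poch_continuous (k : ℕ) : Continuous fun x => poch x k :=
  (ascPochhammer ℂ k).continuous

/-- **Watson's classical summation theorem** for a terminating hypergeometric
`₃F₂`-series of even order. -/
theorem watson_even (n : ℕ) (a c : ℂ)
    (h₁ : ∀ k : ℕ, k < 2 * n → (a + 1) / 2 + k ≠ 0)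
    (h₂ : ∀ k : ℕ, k < 2 * n → 2 * c + k ≠ 0)
    (h₃ : ∀ k : ℕ, k < n → (1 - a) / 2 - n + k ≠ 0)
    (h₄ : ∀ k : ℕ, k < n → 1 / 2 + c + k ≠ 0) :
    ∑ k ∈ Finset.range (2 * n + 1),
      (poch (-(2 * n : ℂ)) k * poch (a + 2 * n) k * poch c k) /
        (poch ((a + 1) / 2) k * poch (2 * c) k * (Nat.factorial k : ℂ)) =
      (poch (1 / 2) n * poch (c + (1 - a) / 2 - n) n) /
        (poch ((1 - a) / 2 - n) n * poch (c + 1 / 2) n) := by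
  have h₃' : ∀ b : ℂ, (∀ k : ℕ, k < 2 * n → (b + 1) / 2 + k ≠ 0) →
      ∀ k : ℕ, k < n → (1 - b) / 2 - n + k ≠ 0 := by
    intro b hb k hk h
    apply hb (n - 1 - k) (by omega)
    rw [Nat.sub_sub, Nat.cast_sub (by omega)]
    push_cast
    linear_combination -h
  have ev : ∀ᶠ b in nhdsWithin a {a}ᶜ,
      (∀ k < 2 * n, (b + 1) / 2 + (k : ℂ) ≠ 0) ∧ (∀ k < n, b + 2 * (k : ℂ) ≠ 0) := by
    have hne : ∀ p : ℂ, ∀ᶠ b in nhdsWithin a {a}ᶜ, b ≠ p := by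
      intro p
      by_cases hp : a = p
      · subst hp; exact self_mem_nhdsWithin
      · exact nhdsWithin_le_nhds (isOpen_ne.mem_nhds hp)
    refine Filter.Eventually.and ?_ ?_
    · refine (Filter.eventually_all_finite (Set.finite_lt_nat (2 * n))).mpr fun k _ => ?_
      filter_upwards [hne (-1 - 2 * k)] with b hb h
      exact hb (by linear_combination 2 * h)
    · refine (Filter.eventually_all_finite (Set.finite_lt_nat n)).mpr fun k _ => ?_
      filter_upwards [hne (-2 * k)] with b hb h
      exact hb (by linear_combination h)
  have cL : ContinuousAt (fun b : ℂ => ∑ k ∈ Finset.range (2 * n + 1),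
      wt (-(2 * n : ℂ)) (b + 2 * n) b c k) a := by
    refine tendsto_finset_sum _ fun k hk => ?_
    have hk : k < 2 * n + 1 := Finset.mem_range.mp hk
    unfold wt
    refine ContinuousAt.div ?_ ?_ ?_
    · exact ((continuous_const.mul ((poch_continuous k).comp
        (continuous_id.add continuous_const))).mul continuous_const).continuousAt
    · exact ((((poch_continuous k).comp ((continuous_id.add continuous_const).div_const 2)).mul
        continuous_const).mul continuous_const).continuousAt
    · exact mul_ne_zero (mul_ne_zero (poch_ne_zero _ _ fun j hj => h₁ j (by omega))
        (poch_ne_zero _ _ fun j hj => h₂ j (by omega)))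
        (by exact_mod_cast Nat.factorial_ne_zero k)
  have cR : ContinuousAt (fun b : ℂ => (poch (1 / 2) n * poch (c + (1 - b) / 2 - n) n) /
        (poch ((1 - b) / 2 - n) n * poch (c + 1 / 2) n)) a := by
    refine ContinuousAt.div ?_ ?_ ?_
    · exact (continuous_const.mul ((poch_continuous n).comp
        (by fun_prop : Continuous fun b : ℂ => c + (1 - b) / 2 - n))).continuousAt
    · exact (((poch_continuous n).comp
        (by fun_prop : Continuous fun b : ℂ => (1 - b) / 2 - n)).mul
          continuous_const).continuousAt
    · exact mul_ne_zero (poch_ne_zero _ _ h₃) (poch_ne_zero _ _ fun j hj => by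
        rw [add_comm c]; exact h₄ j hj)
  have e := tendsto_nhds_unique_of_eventuallyEq
    (cL.tendsto.mono_left (nhdsWithin_le_nhds (s := {a}ᶜ)))
    (cR.tendsto.mono_left (nhdsWithin_le_nhds (s := {a}ᶜ)))
    (by
      filter_upwards [ev] with b hb
      exact watson_generic n b c hb.1 h₂ (h₃' b hb.1) h₄ hb.2)
  exact e
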